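/- arXiv:2103.15010 — 3 statements merged into one kernel-verified Lean document; each statement's English description precedes it below -/
import Mathlib

section
/- Let T > 0, n, m ∈ ℕ, L_F > 0, and let x̃ : [0,T] → ℝⁿ be differentiable and ũ : [0,T] → ℝᵐ continuous, with ‖x̃'(t)‖ ≤ L_F(‖x̃(t)‖ + ‖ũ(t)‖) for all t ∈ [0,T]. Let Q : ℝⁿ → ℝ, R : ℝᵐ → ℝ, V : ℝⁿ → ℝ be continuous with α_Q‖x‖² ≤ Q(x), α_R‖u‖² ≤ R(u), α_V‖x‖² ≤ V(x) for all x, u, where α_Q, α_R, α_V > 0. Define Ṽ(s) = ∫ₛᵀ (Q(x̃(t)) + R(ũ(t))) dt + V(x̃(T)). Then for all 0 ≤ s' ≤ s ≤ T, ‖x̃(s)‖² ≤ (1/α_Q)·(6L_F + 2L_F α_Q/α_R + 2α_Q/α_V)·Ṽ(s'). -/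
open Set

/-!
Test `x` against a functional `f` of norm at most one that norms `x s`. Then `(f ∘ x) ^ 2` equals
`‖x‖ ^ 2` at `s`, is at most `‖x‖ ^ 2` at `T`, and changes at rate at most `2 ‖x‖ ‖x'‖`, so
`‖x s‖ ^ 2 ≤ ‖x T‖ ^ 2 + ∫ t in s..T, 2 ‖x t‖ ‖x' t‖`. The speed bound and Young's inequality
dominate the integrand by `L (3 ‖x‖ ^ 2 + ‖u‖ ^ 2)`, hence by a multiple of the running cost, while
`‖x T‖ ^ 2` is dominated by the same multiple of the terminal cost.
-/

open MeasureTheory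

section CostToGo

variable {E F : Type*}

/-- The cost accumulated from time `s` to the horizon `T` along the trajectory `(x, u)`, for the
running cost `ℓ` and the terminal cost `V`. The running cost is a joint function of state and input;
the separable case is `ℓ x u = Q x + R u`. -/
noncomputable def costToGo (ℓ : E → F → ℝ) (V : E → ℝ) (x : ℝ → E) (u : ℝ → F) (T s : ℝ) : ℝ :=
  (∫ t in s..T, ℓ (x t) (u t)) + V (x T)

variable {ℓ : E → F → ℝ} {V : E → ℝ} {x : ℝ → E} {u : ℝ → F} {T : ℝ}

theorem costToGo_const_mul (C s : ℝ) :
    costToGo (fun y v => C * ℓ y v) (fun y => C * V y) x u T s = C * costToGo ℓ V x u T s := by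
  simp only [costToGo, intervalIntegral.integral_const_mul, mul_add]

theorem costToGo_le_costToGo {r s : ℝ} (hℓ : ∀ y v, 0 ≤ ℓ y v)
    (hcost : IntervalIntegrable (fun t => ℓ (x t) (u t)) volume r T) (hrs : r ≤ s) (hsT : s ≤ T) :
    costToGo ℓ V x u T s ≤ costToGo ℓ V x u T r := by
  unfold costToGo
  gcongr
  exact intervalIntegral.integral_mono_interval hrs hsT le_rfl (.of_forall fun _ => hℓ _ _) hcost

end CostToGo

theorem sq_norm_le_sq_norm_add_integral {E : Type*} [NormedAddCommGroup E] [NormedSpace ℝ E]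
    {x x' : ℝ → E} {φ : ℝ → ℝ} {a b : ℝ} (hab : a ≤ b)
    (hx : ContinuousOn x (Icc a b))
    (hx' : ∀ t ∈ Ioo a b, HasDerivWithinAt x (x' t) (Ioi t) t)
    (hφ : IntervalIntegrable φ volume a b)
    (hle : ∀ t ∈ Ioo a b, 2 * (‖x t‖ * ‖x' t‖) ≤ φ t) :
    ‖x a‖ ^ 2 ≤ ‖x b‖ ^ 2 + ∫ t in a..b, φ t := by
  obtain ⟨f, hf_norm, hf_a⟩ := exists_dual_vector'' ℝ (x a)
  replace hf_a : f (x a) = ‖x a‖ := hf_a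
  have hf_le (y : E) : |f y| ≤ ‖y‖ := by
    simpa using f.le_of_opNorm_le hf_norm y
  have hderiv : ∀ t ∈ Ioo a b, HasDerivWithinAt (fun t => -f (x t) ^ 2)
      (-(2 * f (x t) * f (x' t))) (Ioi t) t := fun t ht => by
    simpa using ((f.hasFDerivAt.comp_hasDerivWithinAt t (hx' t ht)).fun_pow 2).fun_neg
  have hrate : ∀ t ∈ Ioo a b, -(2 * f (x t) * f (x' t)) ≤ φ t := fun t ht =>
    calc -(2 * f (x t) * f (x' t)) ≤ |2 * f (x t) * f (x' t)| := neg_le_abs _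
      _ = 2 * (|f (x t)| * |f (x' t)|) := by simp only [abs_mul, abs_two, mul_assoc]
      _ ≤ 2 * (‖x t‖ * ‖x' t‖) := by gcongr <;> exact hf_le _
      _ ≤ φ t := hle t ht
  have hgrowth : -f (x b) ^ 2 - -f (x a) ^ 2 ≤ ∫ t in a..b, φ t :=
    intervalIntegral.sub_le_integral_of_hasDeriv_right_of_le hab
      ((f.continuous.comp_continuousOn hx).pow 2).neg hderiv
      ((intervalIntegrable_iff_integrableOn_Icc_of_le hab).1 hφ) hrate
  have hf_b : f (x b) ^ 2 ≤ ‖x b‖ ^ 2 := sq_le_sq' (abs_le.1 (hf_le _)).1 (abs_le.1 (hf_le _)).2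
  rw [hf_a] at hgrowth
  linarith

theorem two_mul_mul_le_of_le_mul_add {a b c L : ℝ} (hL : 0 ≤ L) (ha : 0 ≤ a)
    (hc : c ≤ L * (a + b)) :
    2 * (a * c) ≤ L * (3 * a ^ 2 + b ^ 2) :=
  calc 2 * (a * c) ≤ 2 * (a * (L * (a + b))) := by gcongr
    _ = L * (2 * a ^ 2 + 2 * a * b) := by ring
    _ ≤ L * (2 * a ^ 2 + (a ^ 2 + b ^ 2)) := by gcongr; exact two_mul_le_add_sq a b
    _ = L * (3 * a ^ 2 + b ^ 2) := by ring

section StateBound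

variable {E F : Type*} [NormedAddCommGroup E] [NormedSpace ℝ E] [Norm F]
  {ℓ : E → F → ℝ} {V : E → ℝ} {x x' : ℝ → E} {u : ℝ → F} {L αQ αR αV T s : ℝ}

theorem sq_norm_le_costToGo (hL : 0 ≤ L) (hsT : s ≤ T)
    (hx : ContinuousOn x (Icc s T))
    (hx' : ∀ t ∈ Ioo s T, HasDerivWithinAt x (x' t) (Ioi t) t)
    (hspeed : ∀ t ∈ Ioo s T, ‖x' t‖ ≤ L * (‖x t‖ + ‖u t‖))
    (hcost : IntervalIntegrable (fun t => ℓ (x t) (u t)) volume s T)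
    (hℓ : ∀ y v, L * (3 * ‖y‖ ^ 2 + ‖v‖ ^ 2) ≤ ℓ y v) (hV : ∀ y, ‖y‖ ^ 2 ≤ V y) :
    ‖x s‖ ^ 2 ≤ costToGo ℓ V x u T s :=
  calc ‖x s‖ ^ 2 ≤ ‖x T‖ ^ 2 + ∫ t in s..T, ℓ (x t) (u t) :=
        sq_norm_le_sq_norm_add_integral hsT hx hx' hcost fun t ht =>
          (two_mul_mul_le_of_le_mul_add hL (norm_nonneg _) (hspeed t ht)).trans (hℓ _ _)
    _ ≤ V (x T) + ∫ t in s..T, ℓ (x t) (u t) := by gcongr; exact hV _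
    _ = costToGo ℓ V x u T s := add_comm _ _

theorem sq_norm_le_mul_costToGo {C : ℝ} (hL : 0 ≤ L) (hαQ : 0 < αQ) (hαR : 0 < αR) (hαV : 0 < αV)
    (hCQ : 3 * L / αQ ≤ C) (hCR : L / αR ≤ C) (hCV : 1 / αV ≤ C) (hsT : s ≤ T)
    (hx : ContinuousOn x (Icc s T))
    (hx' : ∀ t ∈ Ioo s T, HasDerivWithinAt x (x' t) (Ioi t) t)
    (hspeed : ∀ t ∈ Ioo s T, ‖x' t‖ ≤ L * (‖x t‖ + ‖u t‖))
    (hcost : IntervalIntegrable (fun t => ℓ (x t) (u t)) volume s T)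
    (hℓ : ∀ y v, αQ * ‖y‖ ^ 2 + αR * ‖v‖ ^ 2 ≤ ℓ y v) (hV : ∀ y, αV * ‖y‖ ^ 2 ≤ V y) :
    ‖x s‖ ^ 2 ≤ C * costToGo ℓ V x u T s := by
  have hC : 0 ≤ C := le_trans (by positivity) hCV
  have hrunning (y : E) (v : F) : L * (3 * ‖y‖ ^ 2 + ‖v‖ ^ 2) ≤ C * ℓ y v :=
    calc L * (3 * ‖y‖ ^ 2 + ‖v‖ ^ 2)
        = 3 * L / αQ * (αQ * ‖y‖ ^ 2) + L / αR * (αR * ‖v‖ ^ 2) := by field_simp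
      _ ≤ C * (αQ * ‖y‖ ^ 2) + C * (αR * ‖v‖ ^ 2) := by gcongr
      _ = C * (αQ * ‖y‖ ^ 2 + αR * ‖v‖ ^ 2) := (mul_add _ _ _).symm
      _ ≤ C * ℓ y v := by gcongr; exact hℓ y v
  have hterminal (y : E) : ‖y‖ ^ 2 ≤ C * V y :=
    calc ‖y‖ ^ 2 = 1 / αV * (αV * ‖y‖ ^ 2) := by field_simp
      _ ≤ C * V y := by gcongr; exact hV y
  rw [← costToGo_const_mul]
  exact sq_norm_le_costToGo hL hsT hx hx' hspeed (hcost.const_mul C) hrunning hterminal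

theorem stmt2_general {a r : ℝ} (hL : 0 ≤ L) (hαQ : 0 < αQ) (hαR : 0 < αR) (hαV : 0 < αV)
    (hx : ContinuousOn x (Icc a T))
    (hx' : ∀ t ∈ Ioo a T, HasDerivWithinAt x (x' t) (Ioi t) t)
    (hspeed : ∀ t ∈ Ioo a T, ‖x' t‖ ≤ L * (‖x t‖ + ‖u t‖))
    (hcost : IntervalIntegrable (fun t => ℓ (x t) (u t)) volume a T)
    (hℓ : ∀ y v, αQ * ‖y‖ ^ 2 + αR * ‖v‖ ^ 2 ≤ ℓ y v) (hV : ∀ y, αV * ‖y‖ ^ 2 ≤ V y)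
    (har : a ≤ r) (hrs : r ≤ s) (hsT : s ≤ T) :
    ‖x s‖ ^ 2 ≤
      (1 / αQ) * (6 * L + 2 * L * αQ / αR + 2 * αQ / αV) * costToGo ℓ V x u T r := by
  set C : ℝ := (1 / αQ) * (6 * L + 2 * L * αQ / αR + 2 * αQ / αV)
  have hC : C = 2 * (3 * L / αQ) + 2 * (L / αR) + 2 * (1 / αV) := by
    simp only [C]
    field_simp
    ring
  have hQ_nonneg : 0 ≤ 3 * L / αQ := by positivity
  have hR_nonneg : 0 ≤ L / αR := by positivity
  have hV_nonneg : 0 ≤ 1 / αV := by positivity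
  have hcost_on {b : ℝ} (hab : a ≤ b) (hbT : b ≤ T) :
      IntervalIntegrable (fun t => ℓ (x t) (u t)) volume b T :=
    hcost.mono_set (uIcc_subset_uIcc_right (mem_uIcc_of_le hab hbT))
  have has : a ≤ s := har.trans hrs
  have hIoo : Ioo s T ⊆ Ioo a T := Ioo_subset_Ioo_left has
  calc ‖x s‖ ^ 2 ≤ C * costToGo ℓ V x u T s :=
        sq_norm_le_mul_costToGo hL hαQ hαR hαV (by linarith) (by linarith) (by linarith) hsT
          (hx.mono (Icc_subset_Icc_left has)) (fun t ht => hx' t (hIoo ht))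
          (fun t ht => hspeed t (hIoo ht)) (hcost_on has hsT) hℓ hV
    _ ≤ C * costToGo ℓ V x u T r := by
        refine mul_le_mul_of_nonneg_left ?_ (by positivity)
        exact costToGo_le_costToGo (fun y v => le_trans (by positivity) (hℓ y v))
          (hcost_on har (hrs.trans hsT)) hrs hsT

end StateBound

/-- Lemma 1 (case with terminal cost, `α_V > 0`): along a trajectory whose velocity is
bounded by `L_F(‖x̃‖ + ‖ũ‖)`, the squared state norm at any time `s ≥ s'` is bounded by
`(1/α_Q)(6L_F + 2L_F α_Q/α_R + 2α_Q/α_V)` times the cost-to-go `Ṽ(s')`. -/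
theorem stmt2
    (n m : ℕ) (T LF : ℝ) (hT : 0 < T) (hLF : 0 < LF)
    (αQ αR αV : ℝ) (hαQ : 0 < αQ) (hαR : 0 < αR) (hαV : 0 < αV)
    (xt : ℝ → EuclideanSpace ℝ (Fin n)) (ut : ℝ → EuclideanSpace ℝ (Fin m))
    (hxdiff : ∀ t ∈ Icc (0:ℝ) T, DifferentiableAt ℝ xt t)
    (hut : ContinuousOn ut (Icc 0 T))
    (hder : ∀ t ∈ Icc (0:ℝ) T, ‖deriv xt t‖ ≤ LF * (‖xt t‖ + ‖ut t‖))
    (Q : EuclideanSpace ℝ (Fin n) → ℝ) (R : EuclideanSpace ℝ (Fin m) → ℝ)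
    (V : EuclideanSpace ℝ (Fin n) → ℝ)
    (hQc : Continuous Q) (hRc : Continuous R) (hVc : Continuous V)
    (hQ : ∀ x, αQ * ‖x‖ ^ 2 ≤ Q x)
    (hR : ∀ u, αR * ‖u‖ ^ 2 ≤ R u)
    (hV : ∀ x, αV * ‖x‖ ^ 2 ≤ V x)
    (Vt : ℝ → ℝ)
    (hVt : ∀ s, Vt s = (∫ t in s..T, (Q (xt t) + R (ut t))) + V (xt T)) :
    ∀ s' s : ℝ, 0 ≤ s' → s' ≤ s → s ≤ T →
      ‖xt s‖ ^ 2 ≤ (1 / αQ) * (6 * LF + 2 * LF * αQ / αR + 2 * αQ / αV) * Vt s' := by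
  intro s' s hs' hss hsT
  have hx : ContinuousOn xt (Icc 0 T) := fun t ht => (hxdiff t ht).continuousAt.continuousWithinAt
  rw [hVt s']
  exact stmt2_general (ℓ := fun y v => Q y + R v) hLF.le hαQ hαR hαV hx
    (fun t ht => (hxdiff t (Ioo_subset_Icc_self ht)).hasDerivAt.hasDerivWithinAt)
    (fun t ht => hder t (Ioo_subset_Icc_self ht))
    (((hQc.comp_continuousOn hx).add (hRc.comp_continuousOn hut)).intervalIntegrable_of_Icc hT.le)
    (fun y v => add_le_add (hQ y) (hR v)) hV hs' hss hsT
end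

section
/- Let F : ℝ × ℝ → ℝ be differentiable at (x₀, u₀) with F(x₀, u₀) = 0, x₀ ≠ 0, and B̌ := ∂F/∂u(x₀, u₀) ≠ 0. Let Ǎ := ∂F/∂x(x₀, u₀), q, q_f, r > 0, T > 0. Suppose there exists a differentiable p : [0,T] → ℝ with −p'(t) = Ǎ p(t) + 2q x₀ for all t, p(T) = 2q_f x₀, and B̌ p(t) + 2r u₀ = 0 for all t ∈ [0,T]. Then Ǎ < 0 and x₀·d₀ > 0, where d₀ := −Ǎ x₀ − B̌ u₀. -/
open Set

/-!
A covector is determined by its action on the dense range of `B`, so stationarity freezes the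
costate at its terminal value `φ`. Its derivative then vanishes, and the two costate conditions
become `φ ∘ A = -ℓx` and `φ ∘ B = -ℓu`. Hence `φ (A x₀) = -ℓx x₀`, and pairing `φ` with the drift
`d₀ = -A x₀ - B u₀` gives `φ d₀ = ℓx x₀ + ℓu u₀`. For a quadratic running cost the latter is twice
the cost at `(x₀, u₀)`, by Euler's identity.
-/

section ConstantPair

variable {X U : Type*} [NormedAddCommGroup X] [NormedSpace ℝ X]
  [NormedAddCommGroup U] [NormedSpace ℝ U]

/-- The first-order stationarity conditions on the costate `p` over the horizon `[0, T]` at a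
constant pair. Here `A` and `B` are the state and control Jacobians, `ℓx` and `ℓu` the partial
derivatives of the running cost, and `φ` the derivative of the terminal cost, all evaluated at the
pair. The costate takes values in the dual of the state space, so that `p t ∘L A` is the adjoint of
`A` applied to `p t`, and it is differentiated within `[0, T]`, hence one-sidedly at the ends. -/
structure IsStationaryCostate (A : X →L[ℝ] X) (B : U →L[ℝ] X) (ℓx : StrongDual ℝ X)
    (ℓu : StrongDual ℝ U) (φ : StrongDual ℝ X) (T : ℝ) (p : ℝ → StrongDual ℝ X) : Prop where
  hasDerivWithinAt : ∀ t ∈ Icc 0 T, HasDerivWithinAt p (-(p t ∘L A + ℓx)) (Icc 0 T) t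
  terminal : p T = φ
  stationary : ∀ t ∈ Icc 0 T, p t ∘L B + ℓu = 0

namespace IsStationaryCostate

variable {A : X →L[ℝ] X} {B : U →L[ℝ] X} {ℓx φ : StrongDual ℝ X} {ℓu : StrongDual ℝ U}
  {T : ℝ} {p : ℝ → StrongDual ℝ X}

theorem terminal_comp_controlJacobian (h : IsStationaryCostate A B ℓx ℓu φ T p) (hT : 0 ≤ T) :
    φ ∘L B = -ℓu :=
  h.terminal ▸ eq_neg_of_add_eq_zero_left (h.stationary T (right_mem_Icc.mpr hT))

theorem eqOn_const (h : IsStationaryCostate A B ℓx ℓu φ T p) (hT : 0 ≤ T) (hB : DenseRange B) :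
    EqOn p (fun _ ↦ φ) (Icc 0 T) := by
  intro t ht
  have hcomp : p t ∘L B = φ ∘L B :=
    (eq_neg_of_add_eq_zero_left (h.stationary t ht)).trans
      (h.terminal_comp_controlJacobian hT).symm
  exact DFunLike.coe_injective
    (hB.equalizer (p t).continuous φ.continuous (congrArg DFunLike.coe hcomp))

theorem terminal_comp_stateJacobian (h : IsStationaryCostate A B ℓx ℓu φ T p) (hT : 0 < T)
    (hB : DenseRange B) : φ ∘L A = -ℓx := by
  have hTmem : T ∈ Icc 0 T := right_mem_Icc.mpr hT.le
  have hconst : HasDerivWithinAt p 0 (Icc 0 T) T :=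
    (hasDerivWithinAt_const T (Icc 0 T) φ).congr_of_mem (h.eqOn_const hT.le hB) hTmem
  have hzero : -(p T ∘L A + ℓx) = 0 :=
    (uniqueDiffOn_Icc hT T hTmem).eq_deriv _ (h.hasDerivWithinAt T hTmem) hconst
  exact eq_neg_of_add_eq_zero_left (h.terminal ▸ neg_eq_zero.mp hzero)

theorem terminal_apply_drift (h : IsStationaryCostate A B ℓx ℓu φ T p) (hT : 0 < T)
    (hB : DenseRange B) (x : X) (u : U) : φ (-A x - B u) = ℓx x + ℓu u := by
  have hA : φ (A x) = -ℓx x := DFunLike.congr_fun (h.terminal_comp_stateJacobian hT hB) x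
  have hBu : φ (B u) = -ℓu u := DFunLike.congr_fun (h.terminal_comp_controlJacobian hT.le) u
  rw [map_sub, map_neg, hA, hBu, neg_neg, sub_neg_eq_add]

end IsStationaryCostate

/- For symmetric `Q`, `R` and `Qf`, the covectors `2 • Q x₀`, `2 • R u₀` and `2 • Qf x₀` are the
derivatives of the running cost `Q x x + R u u` and of the terminal cost `Qf x x`. -/
theorem stmt8_general {F : X × U → X} {x₀ : X} {u₀ : U} {A : X →L[ℝ] X} {B : U →L[ℝ] X}
    (hFA : HasFDerivAt (fun x ↦ F (x, u₀)) A x₀) (hFB : HasFDerivAt (fun u ↦ F (x₀, u)) B u₀)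
    (hF0 : F (x₀, u₀) = 0) (hB : DenseRange B)
    {Q Qf : X →L[ℝ] X →L[ℝ] ℝ} {R : U →L[ℝ] U →L[ℝ] ℝ} (hQ : 0 < Q x₀ x₀) (hR : 0 ≤ R u₀ u₀)
    {T : ℝ} (hT : 0 < T) {p : ℝ → StrongDual ℝ X}
    (hp : IsStationaryCostate A B (2 • Q x₀) (2 • R u₀) (2 • Qf x₀) T p) :
    Qf x₀ (A x₀) < 0 ∧ 0 < Qf x₀ (F (x₀, u₀) - A x₀ - B u₀) := by
  have hstate : 2 * Qf x₀ (A x₀) = -(2 * Q x₀ x₀) := by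
    simpa using DFunLike.congr_fun (hp.terminal_comp_stateJacobian hT hB) x₀
  have hdrift : 2 * Qf x₀ (-A x₀ - B u₀) = 2 * Q x₀ x₀ + 2 * R u₀ u₀ := by
    simpa only [smul_apply, nsmul_eq_mul, Nat.cast_ofNat] using
      hp.terminal_apply_drift hT hB x₀ u₀
  rw [hF0, zero_sub]
  constructor <;> linarith

end ConstantPair

section Scalar

open ContinuousLinearMap

theorem denseRange_toSpanSingleton {𝕜 : Type*} [DivisionRing 𝕜] [TopologicalSpace 𝕜]
    [ContinuousMul 𝕜] {b : 𝕜} (hb : b ≠ 0) : DenseRange (toSpanSingleton 𝕜 b) :=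
  (mul_right_surjective₀ hb).denseRange

theorem isStationaryCostate_toSpanSingleton {a b q qf r x u T : ℝ} {p : ℝ → ℝ}
    (hp : ∀ t ∈ Icc 0 T, HasDerivWithinAt p (-(a * p t + 2 * q * x)) (Icc 0 T) t)
    (hpT : p T = 2 * qf * x) (hstat : ∀ t ∈ Icc 0 T, b * p t + 2 * r * u = 0) :
    IsStationaryCostate (toSpanSingleton ℝ a) (toSpanSingleton ℝ b) (2 • (q • mul ℝ ℝ) x)
      (2 • (r • mul ℝ ℝ) u) (2 • (qf • mul ℝ ℝ) x) T (fun t ↦ toSpanSingleton ℝ (p t)) where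
  hasDerivWithinAt t ht := by
    refine (toSpanSingletonCLE.hasFDerivAt.comp_hasDerivWithinAt t (hp t ht)).congr_deriv ?_
    ext
    simp [mul_assoc, mul_left_comm]
  terminal := by
    ext
    simp [hpT, mul_assoc, mul_left_comm]
  stationary t ht := by
    ext
    simpa [mul_assoc, mul_left_comm] using hstat t ht

theorem smul_mul_toSpanSingleton_neg_iff {a c x : ℝ} (hc : 0 < c) (hx : x ≠ 0) :
    (c • mul ℝ ℝ) x (toSpanSingleton ℝ a x) < 0 ↔ a < 0 := by
  have hsq : 0 < c * (x * x) := mul_pos hc (mul_self_pos.mpr hx)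
  have happly : (c • mul ℝ ℝ) x (toSpanSingleton ℝ a x) = c * (x * x) * a := by simp [mul_assoc]
  rw [happly, ← neg_pos, ← mul_neg, mul_pos_iff_of_pos_left hsq, neg_pos]

end Scalar

/-- For a one-dimensional system `ẋ = F(x,u)` with running cost `q x² + r u²` and
terminal cost `q_f x(T)²`: if a constant pair `(x₀, u₀)` with `F(x₀,u₀) = 0`, `x₀ ≠ 0`
admits a costate `p` solving `−ṗ = Ǎ p + 2q x₀`, `p(T) = 2q_f x₀` with
`B̌ p(t) + 2r u₀ ≡ 0` (first-order stationarity), then necessarily `Ǎ < 0` and the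
drift `d₀ = −Ǎx₀ − B̌u₀` satisfies `x₀ d₀ > 0`. -/
theorem stmt8
    (F : ℝ × ℝ → ℝ) (x0 u0 Ac Bc : ℝ)
    (hFdiff : DifferentiableAt ℝ F (x0, u0))
    (hFA : HasDerivAt (fun x => F (x, u0)) Ac x0)
    (hFB : HasDerivAt (fun u => F (x0, u)) Bc u0)
    (hF0 : F (x0, u0) = 0) (hx0 : x0 ≠ 0) (hBc : Bc ≠ 0)
    (q qf r T : ℝ) (hq : 0 < q) (hqf : 0 < qf) (hr : 0 < r) (hT : 0 < T)
    (p : ℝ → ℝ)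
    (hp : ∀ t ∈ Icc (0:ℝ) T, HasDerivAt p (-(Ac * p t + 2 * q * x0)) t)
    (hpT : p T = 2 * qf * x0)
    (hstat : ∀ t ∈ Icc (0:ℝ) T, Bc * p t + 2 * r * u0 = 0) :
    Ac < 0 ∧ x0 * (-(Ac * x0) - Bc * u0) > 0 := by
  have hcostate :=
    isStationaryCostate_toSpanSingleton (fun t ht ↦ (hp t ht).hasDerivWithinAt) hpT hstat
  exact (stmt8_general hFA.hasFDerivAt hFB.hasFDerivAt hF0 (denseRange_toSpanSingleton hBc)
    (mul_pos hq (mul_self_pos.mpr hx0)) (mul_nonneg hr.le (mul_self_nonneg u0)) hT hcostate).imp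
    (smul_mul_toSpanSingleton_neg_iff hqf hx0).mp
    fun hd ↦ by simpa [hF0, hqf, mul_comm] using hd
end

section
/- Let η : ℝ → ℝ be differentiable at 5 with η(5) = 1 and η'(5) = 0. Let T > 0, r > 0, and q = q_f > 0. Let A be the 2×2 matrix with rows (−1, 1) and (0, 0), B = (0, 1)ᵀ ∈ ℝ², and d = (10, 0)ᵀ ∈ ℝ². Define the constant functions x̃(t) = (5, −5), ũ(t) = 0, and p(t) = (10 q_f, 0) on [0,T]. Then: (i) A x̃(t) + B ũ(t) + η(5)·d = 0 for all t, so x̃ is the trajectory of ẋ = Ax + Bu + η(x₁)d from x₀ = (5,−5) under ũ ≡ 0; (ii) the Jacobian of x ↦ Ax + η(x₁)d at x̃(t) equals A (since η'(5) = 0), and −p'(t) = Aᵀ p(t) + 2q x̃(t) for all t with p(T) = (2 q_f · 5, 0) = (10 q_f, 0); (iii) Bᵀ p(t) + 2r ũ(t) = 0 for all t ∈ [0,T]. Hence ũ ≡ 0 satisfies the first-order stationarity conditions for every horizon T > 0 and every r > 0. -/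
open Set Matrix

/-!
To first order at `x₁ = 5` the bump is the constant `1`, so along `x̃ ≡ (5, −5)` the system behaves
like the linear one with constant forcing `d`, and `x̃` is an equilibrium because `A x̃ = −d`. The
cost gradient `2q x̃` is balanced by a costate along the first axis, `Aᵀ(10q, 0) = −2q x̃`, so this
costate is constant too. The terminal weight `q_f = q` makes it meet the terminal condition, and the
input, which acts only along the second axis, does not couple to it.
-/

section Jacobian

variable {𝕜 E F : Type*} [NontriviallyNormedField 𝕜]
  [NormedAddCommGroup E] [NormedSpace 𝕜 E] [NormedAddCommGroup F] [NormedSpace 𝕜 F]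

theorem hasFDerivAt_clm_add_comp_smul_const (L : E →L[𝕜] F) (φ : E →L[𝕜] 𝕜) (d : F)
    {η : 𝕜 → 𝕜} {η' : 𝕜} {x : E} (hη : HasDerivAt η η' (φ x)) :
    HasFDerivAt (fun y => L y + η (φ y) • d) (L + (η' • φ).smulRight d) x :=
  L.hasFDerivAt.add ((hη.comp_hasFDerivAt x φ.hasFDerivAt).smul_const d)

theorem hasFDerivAt_clm_add_comp_smul_const_of_deriv_zero (L : E →L[𝕜] F) (φ : E →L[𝕜] 𝕜)
    (d : F) {η : 𝕜 → 𝕜} {x : E} (hη : HasDerivAt η 0 (φ x)) :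
    HasFDerivAt (fun y => L y + η (φ y) • d) L x :=
  (hasFDerivAt_clm_add_comp_smul_const L φ d hη).congr_fderiv (by ext; simp)

end Jacobian

section Equilibria

/-- The matrix `A` of the linear part of the dynamics `ẋ = Ax + Bu + η(x₁)d`, with entries in an
arbitrary commutative ring. -/
def driftMatrix (R : Type*) [CommRing R] : Matrix (Fin 2) (Fin 2) R := !![-1, 1; 0, 0]

variable {R : Type*} [CommRing R]

theorem driftMatrix_mulVec_add_eq_zero (a : R) :
    driftMatrix R *ᵥ ![a, -a] + ![2 * a, 0] = 0 := by
  ext i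
  fin_cases i <;> simp [driftMatrix, two_mul]

theorem driftMatrix_transpose_mulVec_add_smul_eq_zero (a c : R) :
    (driftMatrix R)ᵀ *ᵥ ![c * a, 0] + c • ![a, -a] = 0 := by
  ext i
  fin_cases i <;> simp [driftMatrix]

end Equilibria

/-- Bump-function counterexample: for the system `ẋ = Ax + Bu + η(x₁)d` with
`A = [[−1,1],[0,0]]`, `B = (0,1)ᵀ`, `d = (10,0)ᵀ` and `η(5) = 1`, `η'(5) = 0`,
the constant input `ũ ≡ 0` from `x₀ = (5,−5)` gives the constant trajectory
`x̃ ≡ (5,−5)`, the Jacobian of the drift dynamics at `x̃` is `A`, and the constant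
costate `p ≡ (10q_f, 0)` (with `q = q_f`) satisfies the costate equation and
`Bᵀp(t) + 2r ũ(t) ≡ 0`, for every horizon `T > 0` and every `r > 0`. -/
theorem stmt9
    (η : ℝ → ℝ) (hη5 : η 5 = 1) (hη'5 : HasDerivAt η 0 5)
    (T r q qf : ℝ) (hT : 0 < T) (hr : 0 < r) (hqf : 0 < qf) (hq : q = qf)
    (A : Matrix (Fin 2) (Fin 2) ℝ) (hA : A = !![-1, 1; 0, 0])
    (B d : Fin 2 → ℝ) (hB : B = ![0, 1]) (hd : d = ![10, 0])
    (xt : ℝ → (Fin 2 → ℝ)) (ut : ℝ → ℝ) (p : ℝ → (Fin 2 → ℝ))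
    (hxt : ∀ t, xt t = ![5, -5]) (hut : ∀ t, ut t = 0)
    (hp : ∀ t, p t = ![10 * qf, 0]) :
    -- (i) equilibrium identity and trajectory property
    (∀ t ∈ Icc (0:ℝ) T, A.mulVec (xt t) + ut t • B + η 5 • d = 0) ∧
    xt 0 = ![5, -5] ∧
    (∀ t ∈ Icc (0:ℝ) T,
      HasDerivAt xt (A.mulVec (xt t) + ut t • B + η ((xt t) 0) • d) t) ∧
    -- (ii) Jacobian of the drift dynamics is A, and the costate equation holds
    (∀ t ∈ Icc (0:ℝ) T,
      HasFDerivAt (fun x : Fin 2 → ℝ => A.mulVec x + η (x 0) • d)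
        (LinearMap.toContinuousLinearMap A.mulVecLin) (xt t)) ∧
    (∀ t ∈ Icc (0:ℝ) T,
      HasDerivAt p (-(Aᵀ.mulVec (p t) + (2 * q) • xt t)) t) ∧
    p T = ![2 * qf * 5, 0] ∧ p T = ![10 * qf, 0] ∧
    -- (iii) stationarity
    (∀ t ∈ Icc (0:ℝ) T, B ⬝ᵥ p t + 2 * r * ut t = 0) := by
  obtain rfl : xt = fun _ => ![5, -5] := funext hxt
  obtain rfl : ut = fun _ => 0 := funext hut
  obtain rfl : p = fun _ => ![10 * qf, 0] := funext hp
  obtain rfl : A = driftMatrix ℝ := hA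
  subst hq
  have equilibrium : driftMatrix ℝ *ᵥ ![5, -5] + (0 : ℝ) • B + η 5 • d = 0 := by
    have d_eq : d = ![2 * 5, 0] := by rw [hd]; norm_num
    rw [zero_smul, add_zero, hη5, one_smul, d_eq, driftMatrix_mulVec_add_eq_zero]
  have terminal : ![10 * q, 0] = ![2 * q * 5, 0] := by
    rw [show 10 * q = 2 * q * 5 by ring]
  have costate_equilibrium : (driftMatrix ℝ)ᵀ *ᵥ ![10 * q, 0] + (2 * q) • ![5, -5] = 0 := by
    rw [terminal, driftMatrix_transpose_mulVec_add_smul_eq_zero]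
  refine ⟨fun _ _ => equilibrium, rfl,
    fun t _ => (hasDerivAt_const t _).congr_deriv equilibrium.symm,
    fun _ _ => hasFDerivAt_clm_add_comp_smul_const_of_deriv_zero
      (LinearMap.toContinuousLinearMap (driftMatrix ℝ).mulVecLin) (ContinuousLinearMap.proj 0) d
      hη'5,
    fun t _ => (hasDerivAt_const t _).congr_deriv (neg_eq_zero.mpr costate_equilibrium).symm,
    terminal, rfl, fun _ _ => by simp [hB]⟩
end
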